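/- Fix i ≥ 1 and a sequence (ρ_j)_{j≥1} of positive reals with ∑_j h_j < ∞ and ∑_j j h_j < ∞. Viewing π_0 and ∑_{j=0}^∞ j π_j as functions of ρ_i (holding all ρ_j, j ≠ i, fixed, and restricting ρ_i to values keeping both series convergent), π_0 is a strictly decreasing function of ρ_i and ∑_{j=0}^∞ j π_j is a strictly increasing function of ρ_i. -/

import Mathlib

/-- `hseq ρ i = ∏_{j=1}^i ρ_j`, with `hseq ρ 0 = 1`. -/
noncomputable def hseq (ρ : ℕ → ℝ) (i : ℕ) : ℝ := ∏ j ∈ Finset.Icc 1 i, ρ j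

/-- Stationary distribution `π_i = h_i / ∑_j h_j` of the birth–death chain. -/
noncomputable def piseq (ρ : ℕ → ℝ) (i : ℕ) : ℝ := hseq ρ i / ∑' j, hseq ρ j

lemma hseq_pos {ρ : ℕ → ℝ} (hρ : ∀ j : ℕ, 1 ≤ j → 0 < ρ j) (n : ℕ) : 0 < hseq ρ n :=
  Finset.prod_pos fun j hj => hρ j (Finset.mem_Icc.mp hj).1

lemma hseq_eq_of_lt {σ τ : ℕ → ℝ} {i n : ℕ} (hagree : ∀ j : ℕ, j ≠ i → τ j = σ j)
    (hn : n < i) : hseq τ n = hseq σ n :=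
  Finset.prod_congr rfl fun j hj => hagree j (by have := (Finset.mem_Icc.mp hj).2; omega)

lemma hseq_eq_mul_of_le {σ τ : ℕ → ℝ} {i n : ℕ} (hi : 1 ≤ i) (hσ : σ i ≠ 0)
    (hagree : ∀ j : ℕ, j ≠ i → τ j = σ j) (hn : i ≤ n) :
    hseq τ n = τ i / σ i * hseq σ n := by
  have hmem : i ∈ Finset.Icc 1 n := Finset.mem_Icc.mpr ⟨hi, hn⟩
  have hrest : ∏ j ∈ (Finset.Icc 1 n).erase i, τ j = ∏ j ∈ (Finset.Icc 1 n).erase i, σ j :=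
    Finset.prod_congr rfl fun j hj => hagree j (Finset.ne_of_mem_erase hj)
  unfold hseq
  rw [← Finset.mul_prod_erase _ _ hmem, ← Finset.mul_prod_erase _ σ hmem, hrest]
  field_simp

lemma tsum_mul_piseq (ρ : ℕ → ℝ) :
    ∑' j : ℕ, (j : ℝ) * piseq ρ j = (∑' j : ℕ, (j : ℝ) * hseq ρ j) / ∑' j, hseq ρ j := by
  simp only [piseq, ← mul_div_assoc, tsum_div_const]

/-- If `v - k • u` has the sign of `j - m` at every `j`, where `m` is the mean of the weights `u`,
then the weights `v` have a larger mean than `u`. -/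
lemma mean_lt_mean_of_sign {u v : ℕ → ℝ} (hu : Summable u) (hv : Summable v)
    (hu' : Summable fun j : ℕ => (j : ℝ) * u j) (hv' : Summable fun j : ℕ => (j : ℝ) * v j)
    (hA : 0 < ∑' j, u j) (hB : 0 < ∑' j, v j) (k : ℝ)
    (hnonneg : ∀ j : ℕ,
      0 ≤ ((j : ℝ) - (∑' j : ℕ, (j : ℝ) * u j) / ∑' j, u j) * (v j - k * u j))
    (l : ℕ)
    (hpos : 0 < ((l : ℝ) - (∑' j : ℕ, (j : ℝ) * u j) / ∑' j, u j) * (v l - k * u l)) :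
    (∑' j : ℕ, (j : ℝ) * u j) / ∑' j, u j < (∑' j : ℕ, (j : ℝ) * v j) / ∑' j, v j := by
  set m := (∑' j : ℕ, (j : ℝ) * u j) / ∑' j, u j with hm
  have hmA : m * ∑' j, u j = ∑' j : ℕ, (j : ℝ) * u j := div_mul_cancel₀ _ hA.ne'
  have hsum : HasSum (fun j : ℕ => ((j : ℝ) - m) * (v j - k * u j))
      ((∑' j : ℕ, (j : ℝ) * v j) - m * (∑' j, v j)
        - k * ((∑' j : ℕ, (j : ℝ) * u j) - m * ∑' j, u j)) := by
    refine HasSum.congr_fun ((hv'.hasSum.sub (hv.hasSum.mul_left m)).sub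
      ((hu'.hasSum.sub (hu.hasSum.mul_left m)).mul_left k)) fun j => ?_
    ring
  have htsum := hsum.summable.tsum_pos hnonneg l hpos
  rw [hsum.tsum_eq, hmA] at htsum
  rw [lt_div_iff₀ hB]
  linarith

/-- Fix `i ≥ 1`. Viewing `π_0` and `∑_j j π_j` as functions of
`ρ_i` (all other coordinates fixed, and restricting to values keeping both
series convergent), `π_0` is strictly decreasing in `ρ_i`, and `∑_j j π_j` is
strictly increasing in `ρ_i`: for two positive sequences `σ, τ` agreeing off
coordinate `i` with `σ_i < τ_i`, one has `π_0(τ) < π_0(σ)` and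
`∑_j j π_j(σ) < ∑_j j π_j(τ)`. -/
theorem stmt3 (i : ℕ) (hi : 1 ≤ i) (σ τ : ℕ → ℝ)
    (hσpos : ∀ j : ℕ, 1 ≤ j → 0 < σ j) (hτpos : ∀ j : ℕ, 1 ≤ j → 0 < τ j)
    (hagree : ∀ j : ℕ, j ≠ i → τ j = σ j) (hlt : σ i < τ i)
    (hσsum : Summable (hseq σ)) (hσmean : Summable (fun j : ℕ => (j : ℝ) * hseq σ j))
    (hτsum : Summable (hseq τ)) (hτmean : Summable (fun j : ℕ => (j : ℝ) * hseq τ j)) :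
    piseq τ 0 < piseq σ 0 ∧
      (∑' j : ℕ, (j : ℝ) * piseq σ j) < ∑' j : ℕ, (j : ℝ) * piseq τ j := by
  have hσi := hσpos i hi
  have hc : 1 < τ i / σ i := (one_lt_div hσi).mpr hlt
  have hlow : ∀ n, n < i → hseq τ n = hseq σ n := fun n hn => hseq_eq_of_lt hagree hn
  have hhigh : ∀ n, i ≤ n → hseq τ n = τ i / σ i * hseq σ n :=
    fun n hn => hseq_eq_mul_of_le hi hσi.ne' hagree hn
  have hA : 0 < ∑' j, hseq σ j :=
    hσsum.tsum_pos (fun j => (hseq_pos hσpos j).le) 0 (hseq_pos hσpos 0)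
  have hstrict : ∀ n, i ≤ n → hseq σ n < hseq τ n := fun n hn => by
    rw [hhigh n hn]
    exact lt_mul_of_one_lt_left (hseq_pos hσpos n) hc
  have hle : ∀ n, hseq σ n ≤ hseq τ n := fun n =>
    (lt_or_ge n i).elim (fun h => (hlow n h).ge) fun h => (hstrict n h).le
  have hAB : ∑' j, hseq σ j < ∑' j, hseq τ j :=
    Summable.tsum_lt_tsum hle (hstrict i le_rfl) hσsum hτsum
  refine ⟨?_, ?_⟩
  · have h0 : ∀ ρ : ℕ → ℝ, hseq ρ 0 = 1 := fun ρ => by simp [hseq]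
    simp only [piseq, h0]
    exact one_div_lt_one_div_of_lt hA hAB
  rw [tsum_mul_piseq, tsum_mul_piseq]
  have hi0 : (0 : ℝ) < i := by exact_mod_cast hi
  rcases le_or_gt ((∑' j : ℕ, (j : ℝ) * hseq σ j) / ∑' j, hseq σ j) i with hm | hm
  · refine mean_lt_mean_of_sign hσsum hτsum hσmean hτmean hA (hA.trans hAB) 1 (fun j => ?_)
      (i + 1) ?_
    · rcases lt_or_ge j i with hj | hj
      · simp [hlow j hj]
      · have hj' : (i : ℝ) ≤ j := by exact_mod_cast hj
        exact mul_nonneg (by linarith) (by linarith [hle j])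
    · exact mul_pos (by push_cast; linarith) (by linarith [hstrict (i + 1) (by omega)])
  · have hneg : ∀ n, n < i → hseq τ n - τ i / σ i * hseq σ n < 0 := fun n hn => by
      rw [hlow n hn]
      linarith [lt_mul_of_one_lt_left (hseq_pos hσpos n) hc]
    refine mean_lt_mean_of_sign hσsum hτsum hσmean hτmean hA (hA.trans hAB) (τ i / σ i)
      (fun j => ?_) 0 ?_
    · rcases lt_or_ge j i with hj | hj
      · have hj' : (j : ℝ) < i := by exact_mod_cast hj
        exact mul_nonneg_of_nonpos_of_nonpos (by linarith) (hneg j hj).le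
      · simp [hhigh j hj]
    · exact mul_pos_of_neg_of_neg (by push_cast; linarith) (hneg 0 (by omega))
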